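/- arXiv:0806.4111 — 2 statements merged into one kernel-verified Lean document; each statement's English description precedes it below -/
import Mathlib

section
/- For n ≥ 2 and m ≥ 2, the configuration space F(ℝᵐ, n) of n distinct ordered points in ℝᵐ is (m−2)-connected. -/
/-- `X` is `m`-connected: nonempty and all homotopy groups `π_i` vanish for `i ≤ m`. -/
def IsNConnected (X : Type*) [TopologicalSpace X] (m : ℕ) : Prop :=
  Nonempty X ∧ ∀ i : ℕ, i ≤ m → ∀ x : X, Subsingleton (HomotopyGroup (Fin i) X x)
/-- The configuration space `F(ℝᵐ, n)` of `n` distinct ordered points in Euclidean `m`-space. -/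
noncomputable def Conf (m n : ℕ) : Type :=
  {x : Fin n → EuclideanSpace ℝ (Fin m) // Function.Injective x}

noncomputable instance (m n : ℕ) : TopologicalSpace (Conf m n) :=
  inferInstanceAs (TopologicalSpace {x : Fin n → EuclideanSpace ℝ (Fin m) // Function.Injective x})

/-- The configuration space `F(ℂ, n)` of `n` distinct ordered points in the plane `ℂ`. -/
def ConfC (n : ℕ) : Type :=
  {x : Fin n → ℂ // Function.Injective x}

instance (n : ℕ) : TopologicalSpace (ConfC n) :=
  inferInstanceAs (TopologicalSpace {x : Fin n → ℂ // Function.Injective x})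

/-- Smooth approximation of a continuous map, keeping the value `x` wherever it is attained. -/
theorem approx_keep {V : Type*} [NormedAddCommGroup V] [NormedSpace ℝ V] [FiniteDimensional ℝ V]
    {i : ℕ} (f : (Fin i → ℝ) → V) (hf : Continuous f) (x : V) {ε : ℝ} (hε : 0 < ε) :
    ∃ g : (Fin i → ℝ) → V, ContDiff ℝ 1 g ∧ (∀ t, dist (g t) (f t) < ε) ∧
      ∀ t, f t = x → g t = x := by
  obtain ⟨h, h1, h2, -⟩ := hf.exists_contDiff_approx (1 : ℕ∞) (ε := fun _ => ε / 4)
    continuous_const (fun _ => by positivity)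
  let χ : ContDiffBump (0 : V) := ⟨ε / 4, ε / 2, by positivity, by linarith⟩
  refine ⟨fun t => x + (1 - χ (h t - x)) • (h t - x), ?_, ?_, ?_⟩
  · have h1' : ContDiff ℝ 1 h := h1
    have hs : ContDiff ℝ 1 (fun t => h t - x) := h1'.sub contDiff_const
    have hχ : ContDiff ℝ 1 (fun t => χ (h t - x)) := χ.contDiff.comp hs
    exact contDiff_const.add ((contDiff_const.sub hχ).smul hs)
  · intro t
    have e : dist (x + (1 - χ (h t - x)) • (h t - x)) (h t) ≤ ε / 2 := by
      have : x + (1 - χ (h t - x)) • (h t - x) - h t = -(χ (h t - x) • (h t - x)) := by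
        module
      rw [dist_eq_norm, this, norm_neg, norm_smul, Real.norm_of_nonneg χ.nonneg]
      by_cases hc : dist (h t - x) 0 < ε / 2
      · rw [dist_zero_right] at hc
        calc _ ≤ 1 * ‖h t - x‖ := by gcongr; exact χ.le_one
          _ ≤ ε / 2 := by linarith
      · rw [χ.zero_of_le_dist (not_lt.1 hc)]
        simp; positivity
    have := h2 t
    have h3 := dist_triangle (x + (1 - χ (h t - x)) • (h t - x)) (h t) (f t)
    have : dist (h t) (f t) < ε / 4 := by exact h2 t
    show dist (x + (1 - χ (h t - x)) • (h t - x)) (f t) < ε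
    linarith
  · intro t ht
    have hd : dist (h t) (f t) < ε / 4 := by exact h2 t
    have : χ (h t - x) = 1 := by
      apply χ.one_of_mem_closedBall
      rw [Metric.mem_closedBall, dist_zero_right, ← dist_eq_norm, ← ht]
      exact hd.le
    simp [this]

/-- The bump weight used to push the cone off the diagonals. -/
def coneWeight {i : ℕ} (s : ℝ) (t : Fin i → ℝ) : ℝ := s * (1 - s) * ∏ j, (t j * (1 - t j))

/-- The open cube. -/
def openCube (i : ℕ) : Set (ℝ × (Fin i → ℝ)) :=
  Set.Ioo 0 1 ×ˢ Set.univ.pi (fun _ => Set.Ioo 0 1)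

theorem coneWeight_pos {i : ℕ} {p : ℝ × (Fin i → ℝ)} (hp : p ∈ openCube i) :
    0 < coneWeight p.1 p.2 := by
  obtain ⟨h1, h2⟩ := hp
  have : 0 < ∏ j, (p.2 j * (1 - p.2 j)) := by
    apply Finset.prod_pos
    intro j _
    have := h2 j (Set.mem_univ j)
    exact mul_pos this.1 (by linarith [this.2])
  exact mul_pos (mul_pos h1.1 (by linarith [h1.2])) this

/-- A generic direction for pushing the straight-line homotopy off the diagonals. -/
theorem exists_generic {m n i : ℕ} (hi : i + 1 < m)
    (g : (Fin i → ℝ) → (Fin n → EuclideanSpace ℝ (Fin m))) (hg : ContDiff ℝ 1 g)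
    (x : Fin n → EuclideanSpace ℝ (Fin m)) :
    ∃ u : EuclideanSpace ℝ (Fin m), ∀ p ∈ openCube i,
      Function.Injective (fun k : Fin n => ((1 - p.1) • g p.2 k + p.1 • x k) +
        (coneWeight p.1 p.2 * (k : ℝ)) • u) := by
  let B : Fin n × Fin n → (ℝ × (Fin i → ℝ)) → EuclideanSpace ℝ (Fin m) := fun q p =>
    (coneWeight p.1 p.2)⁻¹ • ((((q.2 : ℕ) : ℝ) - ((q.1 : ℕ) : ℝ))⁻¹ •
      (((1 - p.1) • g p.2 q.1 + p.1 • x q.1) - ((1 - p.1) • g p.2 q.2 + p.1 • x q.2)))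
  have hconv : Convex ℝ (openCube i) :=
    (convex_Ioo 0 1).prod (convex_pi fun _ _ => convex_Ioo 0 1)
  have hB : ∀ q, ContDiffOn ℝ 1 (B q) (openCube i) := by
    intro q
    have hgk : ∀ k, ContDiff ℝ 1 (fun p : ℝ × (Fin i → ℝ) => g p.2 k) := fun k =>
      (contDiff_pi.1 hg k).comp contDiff_snd
    have hw : ContDiff ℝ 1 (fun p : ℝ × (Fin i → ℝ) => coneWeight p.1 p.2) := by
      unfold coneWeight
      refine (contDiff_fst.mul (contDiff_const.sub contDiff_fst)).mul ?_
      refine contDiff_prod fun j _ => ?_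
      have : ContDiff ℝ 1 (fun p : ℝ × (Fin i → ℝ) => p.2 j) :=
        (contDiff_apply ℝ ℝ j).comp contDiff_snd
      exact this.mul (contDiff_const.sub this)
    have hm : ∀ k, ContDiff ℝ 1 (fun p : ℝ × (Fin i → ℝ) => (1 - p.1) • g p.2 k + p.1 • x k) :=
      fun k => ((contDiff_const.sub contDiff_fst).smul (hgk k)).add
        (contDiff_fst.smul contDiff_const)
    exact (hw.contDiffOn.inv fun p hp => (coneWeight_pos hp).ne').smul
      (((hm q.1).sub (hm q.2)).const_smul _).contDiffOn
  have hdim : dimH (⋃ q, B q '' openCube i) <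
      Module.finrank ℝ (EuclideanSpace ℝ (Fin m)) := by
    have h1 : dimH (⋃ q, B q '' openCube i) ≤ ((i + 1 : ℕ) : ENNReal) := by
      rw [dimH_iUnion]
      refine iSup_le fun q => ((hB q).dimH_image_le hconv subset_rfl).trans ?_
      refine (dimH_mono (Set.subset_univ _)).trans ?_
      rw [Real.dimH_univ_eq_finrank]
      simp [add_comm]
    refine h1.trans_lt ?_
    rw [finrank_euclideanSpace_fin]
    exact_mod_cast hi
  obtain ⟨u, hu⟩ := (dense_compl_of_dimH_lt_finrank hdim).nonempty
  refine ⟨u, fun p hp a b hab => ?_⟩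
  by_contra hne
  apply hu
  refine Set.mem_iUnion.2 ⟨(a, b), p, hp, ?_⟩
  have hc : ((b : ℕ) : ℝ) - ((a : ℕ) : ℝ) ≠ 0 := by
    rw [sub_ne_zero]
    exact fun h => hne (Fin.ext (by exact_mod_cast h.symm))
  have hw := (coneWeight_pos hp).ne'
  simp only at hab
  have key : ((1 - p.1) • g p.2 a + p.1 • x a) - ((1 - p.1) • g p.2 b + p.1 • x b) =
      (((b : ℕ) : ℝ) - ((a : ℕ) : ℝ)) • (coneWeight p.1 p.2 • u) := by
    rw [← sub_eq_zero] at hab ⊢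
    rw [← hab]
    module
  show (coneWeight p.1 p.2)⁻¹ • ((((b : ℕ) : ℝ) - ((a : ℕ) : ℝ))⁻¹ • _) = u
  rw [key, inv_smul_smul₀ hc, inv_smul_smul₀ hw]

/-- Injective tuples form an open set. -/
theorem isOpen_injective (m n : ℕ) :
    IsOpen {x : Fin n → EuclideanSpace ℝ (Fin m) | Function.Injective x} := by
  have : {x : Fin n → EuclideanSpace ℝ (Fin m) | Function.Injective x} =
      ⋂ q : {q : Fin n × Fin n // q.1 ≠ q.2}, {x | x q.1.1 ≠ x q.1.2} := by
    ext x
    simp only [Set.mem_setOf_eq, Set.mem_iInter, Subtype.forall, Prod.forall]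
    exact ⟨fun h a b hab he => hab (h he), fun h a b he => by_contra fun hab => h a b hab he⟩
  rw [this]
  exact isOpen_iInter_of_finite fun q =>
    isOpen_ne_fun (continuous_apply _) (continuous_apply _)

/-- Every generalized loop of small dimension in the configuration space is nullhomotopic. -/
theorem genLoop_null {m n i : ℕ} (hi : i + 1 < m) (x : Conf m n)
    (f : GenLoop (Fin i) (Conf m n) x) : GenLoop.Homotopic f GenLoop.const := by
  let cl : (Fin i → ℝ) → (Fin i → unitInterval) := fun t j => Set.projIcc 0 1 zero_le_one (t j)
  have hcl : Continuous cl := continuous_pi fun j => continuous_projIcc.comp (continuous_apply j)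
  have hval : Continuous (Subtype.val : Conf m n → _) := continuous_subtype_val
  have hfc : Continuous (fun t => (f t).1) := hval.comp f.1.continuous
  let F : (Fin i → ℝ) → (Fin n → EuclideanSpace ℝ (Fin m)) := fun t => (f (cl t)).1
  have hF : Continuous F := hfc.comp hcl
  have hFt : ∀ t : Fin i → unitInterval, F (fun j => (t j : ℝ)) = (f t).1 := by
    intro t
    have : cl (fun j => (t j : ℝ)) = t := by
      funext j
      exact Set.projIcc_val zero_le_one (t j)
    simp only [F, this]
  have hK : IsCompact (Set.range fun t => (f t).1) := isCompact_range hfc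
  obtain ⟨δ, hδ, hsub⟩ := hK.exists_thickening_subset_open (isOpen_injective m n)
    (by rintro _ ⟨t, rfl⟩; exact (f t).2)
  obtain ⟨g, hg, hgd, hgx⟩ := approx_keep F hF x.1 hδ
  obtain ⟨u, hu⟩ := exists_generic hi g hg x.1
  have hb : ∀ t ∈ Cube.boundary (Fin i), g (fun j => (t j : ℝ)) = x.1 := by
    intro t ht
    apply hgx
    rw [hFt, f.2 t ht |> fun h => (show f t = x from h)]
  let ct : (Fin i → unitInterval) → (Fin i → ℝ) := fun t j => (t j : ℝ)
  have hct : Continuous ct := by fun_prop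
  -- first homotopy
  have inj1 : ∀ (s : unitInterval) (t : Fin i → unitInterval),
      Function.Injective ((1 - (s : ℝ)) • (f t).1 + (s : ℝ) • g (ct t)) := by
    intro s t
    apply hsub
    rw [Metric.mem_thickening_iff]
    refine ⟨(f t).1, ⟨t, rfl⟩, ?_⟩
    have h1 : (f t).1 ∈ Metric.ball (f t).1 δ := Metric.mem_ball_self hδ
    have h2 : g (ct t) ∈ Metric.ball (f t).1 δ := by
      rw [Metric.mem_ball, ← hFt]; exact hgd _
    exact convex_ball _ _ h1 h2 (by linarith [s.2.2]) s.2.1 (by ring)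
  have gcont : Continuous (fun t => g (ct t)) := hg.continuous.comp hct
  have ginj : ∀ t, Function.Injective (g (ct t)) := by
    intro t
    simpa using inj1 1 t
  let G : GenLoop (Fin i) (Conf m n) x :=
    ⟨⟨fun t => (⟨g (ct t), ginj t⟩ : Conf m n), gcont.subtype_mk _⟩,
      fun t ht => Subtype.ext (hb t ht)⟩
  have H1 : GenLoop.Homotopic f G := by
    refine ⟨⟨⟨⟨fun p => (⟨_, inj1 p.1 p.2⟩ : Conf m n), ?_⟩, ?_, ?_⟩, ?_⟩⟩
    · refine Continuous.subtype_mk ?_ _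
      have a1 : Continuous fun p : unitInterval × (Fin i → unitInterval) => (f p.2).1 :=
        hfc.comp continuous_snd
      have a2 : Continuous fun p : unitInterval × (Fin i → unitInterval) => g (ct p.2) :=
        gcont.comp continuous_snd
      have a3 : Continuous fun p : unitInterval × (Fin i → unitInterval) => (p.1 : ℝ) := by
        fun_prop
      exact ((continuous_const.sub a3).smul a1).add (a3.smul a2)
    · intro t
      apply Subtype.ext
      simp
    · intro t
      apply Subtype.ext
      simp [G]
      rfl
    · intro s t ht
      apply Subtype.ext
      have e1 : f t = x := f.2 t ht
      have e2 : g (ct t) = x.1 := hb t ht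
      show (1 - (s : ℝ)) • (f t).1 + (s : ℝ) • g (ct t) = (f t).1
      rw [e1, e2]
      module
  -- second homotopy
  have wb : ∀ (s : ℝ), ∀ t ∈ Cube.boundary (Fin i), coneWeight s (ct t) = 0 := by
    rintro s t ⟨j, hj⟩
    unfold coneWeight
    rw [Finset.prod_eq_zero (Finset.mem_univ j), mul_zero]
    rcases hj with hj | hj <;> simp [ct, hj]
  have eb : ∀ (s : ℝ), ∀ t ∈ Cube.boundary (Fin i),
      (fun k : Fin n => ((1 - s) • g (ct t) k + s • x.1 k) +
        (coneWeight s (ct t) * (k : ℝ)) • u) = x.1 := by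
    intro s t ht
    funext k
    have e2 : g (ct t) = x.1 := hb t ht
    rw [wb s t ht, e2]
    module
  have inj2 : ∀ (s : unitInterval) (t : Fin i → unitInterval),
      Function.Injective (fun k : Fin n => ((1 - (s : ℝ)) • g (ct t) k + (s : ℝ) • x.1 k) +
        (coneWeight (s : ℝ) (ct t) * (k : ℝ)) • u) := by
    intro s t
    by_cases ht : t ∈ Cube.boundary (Fin i)
    · rw [eb _ t ht]; exact x.2
    by_cases h0 : s = 0
    · subst h0
      simpa [coneWeight] using ginj t
    by_cases h1 : s = 1
    · subst h1
      simpa [coneWeight] using x.2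
    refine hu ((s : ℝ), ct t) ⟨⟨unitInterval.pos_iff_ne_zero.2 h0,
      unitInterval.lt_one_iff_ne_one.2 h1⟩, fun j _ => ⟨?_, ?_⟩⟩
    · exact unitInterval.pos_iff_ne_zero.2 fun h => ht ⟨j, Or.inl h⟩
    · exact unitInterval.lt_one_iff_ne_one.2 fun h => ht ⟨j, Or.inr h⟩
  have H2 : GenLoop.Homotopic G GenLoop.const := by
    refine ⟨⟨⟨⟨fun p => (⟨_, inj2 p.1 p.2⟩ : Conf m n), ?_⟩, ?_, ?_⟩, ?_⟩⟩
    · refine Continuous.subtype_mk ?_ _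
      refine continuous_pi fun k => ?_
      have a2 : Continuous fun p : unitInterval × (Fin i → unitInterval) => g (ct p.2) k :=
        (continuous_apply k).comp (gcont.comp continuous_snd)
      have a3 : Continuous fun p : unitInterval × (Fin i → unitInterval) => (p.1 : ℝ) := by
        fun_prop
      have a4 : Continuous fun p : unitInterval × (Fin i → unitInterval) =>
          coneWeight (p.1 : ℝ) (ct p.2) := by
        unfold coneWeight
        fun_prop
      exact (((continuous_const.sub a3).smul a2).add (a3.smul continuous_const)).add
        ((a4.mul continuous_const).smul continuous_const)
    · intro t
      apply Subtype.ext
      funext k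
      simp [G, coneWeight]
      rfl
    · intro t
      apply Subtype.ext
      funext k
      simp [coneWeight, GenLoop.const]
    · intro s t ht
      apply Subtype.ext
      exact (eb s t ht).trans (hb t ht).symm
  exact H1.trans H2

/-- for `n ≥ 2` and `m ≥ 2`, the configuration space `F(ℝᵐ, n)` is
`(m - 2)`-connected. -/
theorem conf_is_connected (m n : ℕ) (hm : 2 ≤ m) (hn : 2 ≤ n) :
    IsNConnected (Conf m n) (m - 2) := by
  refine ⟨⟨⟨fun k => EuclideanSpace.single ⟨0, by omega⟩ ((k : ℕ) : ℝ), ?_⟩⟩, ?_⟩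
  · intro a b hab
    have := congrArg (fun v : EuclideanSpace ℝ (Fin m) => v ⟨0, by omega⟩) hab
    simp only [EuclideanSpace.single_apply, if_true] at this
    exact Fin.ext (by exact_mod_cast this)
  · intro i hi x
    have h : ∀ a : HomotopyGroup (Fin i) (Conf m n) x,
        a = Quotient.mk (GenLoop.Homotopic.setoid (Fin i) x) GenLoop.const := by
      intro a
      refine Quotient.inductionOn a fun f => Quotient.sound ?_
      exact genLoop_null (by omega) x f
    exact ⟨fun a b => (h a).trans (h b).symm⟩
end

section
/- For n ≥ 2, the configuration space F(ℂ, n) of n distinct ordered points in the plane is homotopy equivalent to X × S¹ for some finite polyhedron X of dimension at most n − 2. -/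
/-- Formal convex combinations supported on chains of a finite poset. -/
def OrdCx (P : Type) [Fintype P] [PartialOrder P] : Set (P → ℝ) :=
  {w | (∀ p, 0 ≤ w p) ∧ ∑ p, w p = 1 ∧ ∀ p q, w p ≠ 0 → w q ≠ 0 → p ≤ q ∨ q ≤ p}

theorem ordCx_realize (P : Type) [Fintype P] [PartialOrder P] (m : ℕ)
    (hm : ∀ c : Finset P, (∀ p ∈ c, ∀ q ∈ c, p ≤ q ∨ q ≤ p) → c.card ≤ m) :
    ∃ (N : ℕ) (K : Geometry.SimplicialComplex ℝ (EuclideanSpace ℝ (Fin N))),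
      K.faces.Finite ∧ (∀ s ∈ K.faces, s.card ≤ m) ∧
      Nonempty (OrdCx P ≃ₜ K.space) := by
  classical
  let e := Fintype.equivFin P
  let v : P → EuclideanSpace ℝ (Fin (Fintype.card P)) := fun p => EuclideanSpace.single (e p) 1
  have hvli : LinearIndependent ℝ v := by
    have h := (EuclideanSpace.basisFun (Fin (Fintype.card P)) ℝ).toBasis.linearIndependent
    have h2 := h.comp e e.injective
    have hve : v = (EuclideanSpace.basisFun (Fin (Fintype.card P)) ℝ).toBasis ∘ e := by
      ext p
      simp [v]
    rw [hve]
    exact h2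
  have hv : Function.Injective v := hvli.injective
  have hrange : AffineIndependent ℝ ((↑) : Set.range v → EuclideanSpace ℝ (Fin (Fintype.card P))) :=
    hvli.affineIndependent.range
  have hvapp : ∀ p q, v p (e q) = if p = q then 1 else 0 := by
    intro p q
    simp [v, eq_comm]
  have hsumapp : ∀ (c : Finset P) (w : P → ℝ) q, (∑ p ∈ c, w p • v p) (e q) = if q ∈ c then w q else 0 := by
    intro c w q
    simp [hvapp]
  let Ch : Set (Finset P) := {c | ∀ p ∈ c, ∀ q ∈ c, p ≤ q ∨ q ≤ p}
  let F : Set (Finset (EuclideanSpace ℝ (Fin (Fintype.card P)))) := (fun c => c.image v) '' Ch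
  have hFsub : ∀ s ∈ F, (s : Set _) ⊆ Set.range v := by
    rintro _ ⟨c, -, rfl⟩
    simp
  let K : Geometry.SimplicialComplex ℝ (EuclideanSpace ℝ (Fin (Fintype.card P))) :=
    Geometry.SimplicialComplex.ofErase F
      (fun s hs => hrange.mono (hFsub s hs))
      (by
        rintro _ t hts ⟨c, hc, rfl⟩
        refine ⟨c.filter (fun p => v p ∈ t), ?_, ?_⟩
        · intro p hp q hq
          exact hc p (Finset.mem_filter.1 hp).1 q (Finset.mem_filter.1 hq).1
        · ext x
          simp only [Finset.mem_image, Finset.mem_filter]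
          constructor
          · rintro ⟨p, ⟨_, h⟩, rfl⟩; exact h
          · intro hx
            obtain ⟨p, hp, rfl⟩ := Finset.mem_image.1 (hts hx)
            exact ⟨p, ⟨hp, hx⟩, rfl⟩)
      (by
        intro s hs t ht
        refine (AffineIndependent.convexHull_inter' (R := ℝ) (t₁ := s) (t₂ := t) ?_).ge
        refine hrange.mono ?_
        rw [Finset.coe_union]
        exact Set.union_subset (hFsub s hs) (hFsub t ht))
  have hKf : K.faces = F \ {∅} := rfl
  have key : ∀ x : EuclideanSpace ℝ (Fin (Fintype.card P)), x ∈ K.space ↔ (fun p => x (e p)) ∈ OrdCx P := by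
    intro x
    rw [Geometry.SimplicialComplex.mem_space_iff]
    constructor
    · rintro ⟨s, hs, hx⟩
      rw [hKf] at hs
      obtain ⟨⟨c, hc, rfl⟩, -⟩ := hs
      obtain ⟨w, hw0, hw1, rfl⟩ := Finset.mem_convexHull'.1 hx
      rw [Finset.sum_image hv.injOn] at hw1
      simp only [Finset.sum_image hv.injOn]
      have h := hsumapp c (fun p => w (v p))
      have hfun : (fun p => (∑ p ∈ c, w (v p) • v p) (e p)) = fun q => if q ∈ c then w (v q) else 0 := by
        ext q; exact h q
      rw [hfun]
      refine ⟨?_, ?_, ?_⟩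
      · intro p
        dsimp only
        split_ifs with hp
        · exact hw0 _ (Finset.mem_image_of_mem v hp)
        · exact le_rfl
      · rw [← hw1]; simp
      · intro p q hp hq
        have hp' : p ∈ c := by by_contra h; simp [h] at hp
        have hq' : q ∈ c := by by_contra h; simp [h] at hq
        exact hc p hp' q hq'
    · rintro ⟨h0, h1, h2⟩
      let c : Finset P := Finset.univ.filter (fun p => x (e p) ≠ 0)
      refine ⟨c.image v, ?_, ?_⟩
      · rw [hKf]
        refine ⟨⟨c, ?_, rfl⟩, ?_⟩
        · intro p hp q hq
          exact h2 p q (Finset.mem_filter.1 hp).2 (Finset.mem_filter.1 hq).2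
        · intro hE
          have hE' : c = ∅ := by simpa using hE
          have : ∑ p, x (e p) = 0 := by
            refine Finset.sum_eq_zero fun p _ => ?_
            by_contra h
            have : p ∈ c := by simp [c, h]
            rw [hE'] at this; simp at this
          simp only at h1
          linarith
      · rw [Finset.mem_convexHull']
        refine ⟨fun y => ∑ p, if v p = y then x (e p) else 0, ?_, ?_, ?_⟩
        · intro y _
          refine Finset.sum_nonneg fun p _ => ?_
          split_ifs
          · exact h0 p
          · exact le_rfl
        · rw [Finset.sum_image hv.injOn]
          simp only [hv.eq_iff]
          simp only [Finset.sum_ite_eq', Finset.mem_univ, if_true]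
          rw [← h1]
          exact Finset.sum_filter_ne_zero _
        · rw [Finset.sum_image hv.injOn]
          simp only [hv.eq_iff]
          simp only [Finset.sum_ite_eq', Finset.mem_univ, if_true]
          ext k
          obtain ⟨q, rfl⟩ := e.surjective k
          rw [hsumapp c (fun p => x (e p))]
          by_cases hq : q ∈ c
          · simp [hq]
          · simp only [hq, if_false]
            simpa [c, eq_comm] using hq
  refine ⟨Fintype.card P, K, ?_, ?_, ?_⟩
  · rw [hKf]
    exact (((Set.toFinite Ch).image _).subset Set.sdiff_subset)
  · intro s hs
    rw [hKf] at hs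
    obtain ⟨⟨c, hc, rfl⟩, -⟩ := hs
    exact Finset.card_image_le.trans (hm c hc)
  · refine ⟨⟨⟨fun w => ⟨WithLp.toLp 2 (fun k => w.1 (e.symm k)), ?_⟩, fun x => ⟨fun p => x.1 (e p), (key _).1 x.2⟩, ?_, ?_⟩, ?_, ?_⟩⟩
    · rw [key]; simp
    · intro w; ext p; simp
    · intro x; ext p; simp
    · refine Continuous.subtype_mk ?_ _
      refine (PiLp.continuous_toLp 2 _).comp ?_
      exact continuous_pi fun k => (continuous_apply (e.symm k)).comp continuous_subtype_val
    · refine Continuous.subtype_mk ?_ _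
      fun_prop
/-! ### Combinatorics of strata -/

section Strata

variable {n : ℕ}

/-- The cuts of a configuration `z`: proper subsets lying to the left of their complement by a gap
greater than `ε` (measured on real parts). -/
noncomputable def cuts (ε : ℝ) (z : Fin n → ℂ) : Finset (Finset (Fin n)) :=
  open Classical in
  Finset.univ.filter (fun A => A.Nonempty ∧ A ≠ Finset.univ ∧
    ∀ a ∈ A, ∀ b, b ∉ A → (z a).re + ε < (z b).re)

/-- `i` is separated from `j` by a family of cuts. -/
def sepd (L : Finset (Finset (Fin n))) (i j : Fin n) : Prop := ∃ A ∈ L, i ∈ A ∧ j ∉ A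

/-- The pairs which are not separated, ordered by imaginary parts. -/
noncomputable def vert (L : Finset (Finset (Fin n))) (z : Fin n → ℂ) : Finset (Fin n × Fin n) :=
  open Classical in
  Finset.univ.filter (fun q => ¬ sepd L q.1 q.2 ∧ ¬ sepd L q.2 q.1 ∧ (z q.1).im < (z q.2).im)

/-- The type of combinatorial types. -/
abbrev CT (n : ℕ) := Finset (Finset (Fin n)) × (Finset (Fin n × Fin n))ᵒᵈ

/-- The combinatorial type at scale `ε`. -/
noncomputable def ctype (ε : ℝ) (z : Fin n → ℂ) : CT n :=
  (cuts ε z, OrderDual.toDual (vert (cuts ε z) z))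

/-- Number of cuts to the left of `i`. -/
noncomputable def rk (L : Finset (Finset (Fin n))) (i : Fin n) : ℕ :=
  (L.filter (fun A => i ∉ A)).card

/-- Normalized configurations: the difference of the points `i1` and `i0` is positive real. -/
def NConf (i0 i1 : Fin n) : Set (Fin n → ℂ) :=
  {z | Function.Injective z ∧ (z i0).im = (z i1).im ∧ (z i0).re < (z i1).re}

theorem mem_cuts {ε : ℝ} {z : Fin n → ℂ} {A : Finset (Fin n)} :
    A ∈ cuts ε z ↔ A.Nonempty ∧ A ≠ Finset.univ ∧
      ∀ a ∈ A, ∀ b, b ∉ A → (z a).re + ε < (z b).re := by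
  simp [cuts]

theorem mem_vert {L : Finset (Finset (Fin n))} {z : Fin n → ℂ} {i j : Fin n} :
    (i, j) ∈ vert L z ↔ ¬ sepd L i j ∧ ¬ sepd L j i ∧ (z i).im < (z j).im := by
  simp [vert]

theorem sepd_mono {L L' : Finset (Finset (Fin n))} (h : L ⊆ L') {i j : Fin n} (hs : sepd L i j) :
    sepd L' i j := by
  obtain ⟨A, hA, h1⟩ := hs
  exact ⟨A, h hA, h1⟩

theorem cuts_anti {ε ε' : ℝ} (h : ε ≤ ε') (z : Fin n → ℂ) : cuts ε' z ⊆ cuts ε z := by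
  intro A hA
  rw [mem_cuts] at *
  exact ⟨hA.1, hA.2.1, fun a ha b hb => by linarith [hA.2.2 a ha b hb]⟩

theorem vert_anti {L L' : Finset (Finset (Fin n))} (h : L ⊆ L') (z : Fin n → ℂ) :
    vert L' z ⊆ vert L z := by
  rintro ⟨i, j⟩ hq
  rw [mem_vert] at *
  exact ⟨fun hs => hq.1 (sepd_mono h hs), fun hs => hq.2.1 (sepd_mono h hs), hq.2.2⟩

theorem ctype_anti (z : Fin n → ℂ) : Antitone (fun ε => ctype ε z) := by
  intro ε ε' h
  exact ⟨cuts_anti h z, vert_anti (cuts_anti h z) z⟩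

theorem cuts_congr {ε ε' : ℝ} {z z' : Fin n → ℂ}
    (h : ∀ a b, (z a).re + ε < (z b).re ↔ (z' a).re + ε' < (z' b).re) :
    cuts ε z = cuts ε' z' := by
  ext A
  simp only [mem_cuts, h]

theorem sepd_re {ε : ℝ} {z : Fin n → ℂ} {i j : Fin n} (h : sepd (cuts ε z) i j) :
    (z i).re + ε < (z j).re := by
  obtain ⟨A, hA, hi, hj⟩ := h
  exact (mem_cuts.1 hA).2.2 i hi j hj

theorem rk_lt_of_sepd {L : Finset (Finset (Fin n))} {i j : Fin n} (h : sepd L i j)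
    (h' : ¬ sepd L j i) : rk L i < rk L j := by
  obtain ⟨B, hB, hi, hj⟩ := h
  apply Finset.card_lt_card
  rw [Finset.ssubset_iff_of_subset]
  · exact ⟨B, by simp [hB, hj], by simp [hi]⟩
  · intro A hA
    rw [Finset.mem_filter] at *
    exact ⟨hA.1, fun hjA => h' ⟨A, hA.1, hjA, hA.2⟩⟩

theorem rk_le_of_not_sepd {L : Finset (Finset (Fin n))} {i j : Fin n}
    (h : ¬ sepd L j i) : rk L i ≤ rk L j := by
  apply Finset.card_le_card
  intro A hA
  rw [Finset.mem_filter] at *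
  exact ⟨hA.1, fun hjA => h ⟨A, hA.1, hjA, hA.2⟩⟩

theorem sepd_asymm {ε : ℝ} (hε : 0 ≤ ε) {z : Fin n → ℂ} {i j : Fin n}
    (h : sepd (cuts ε z) i j) : ¬ sepd (cuts ε z) j i := by
  intro h'
  have h1 := sepd_re h
  have h2 := sepd_re h'
  linarith

/-- Adjacent points across a cut. -/
theorem exists_adjacent {ε : ℝ} (hε : 0 ≤ ε) {z : Fin n → ℂ} {A : Finset (Fin n)}
    (hne : A.Nonempty) (hnu : A ≠ Finset.univ) :
    ∃ a ∈ A, ∃ b, b ∉ A ∧ ∀ B ∈ cuts ε z, a ∈ B → b ∉ B → B = A := by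
  obtain ⟨a, ha, hmax⟩ := Finset.exists_max_image A (rk (cuts ε z)) hne
  have hne' : (Aᶜ).Nonempty := by
    rw [Finset.nonempty_iff_ne_empty]
    simpa using hnu
  obtain ⟨b, hb, hmin⟩ := Finset.exists_min_image Aᶜ (rk (cuts ε z)) hne'
  refine ⟨a, ha, b, by simpa using hb, ?_⟩
  intro B hB haB hbB
  ext c
  constructor
  · intro hc
    by_contra hcA
    have h1 := hmin c (by simpa using hcA)
    have hs : sepd (cuts ε z) c b := ⟨B, hB, hc, hbB⟩
    have h2 := rk_lt_of_sepd hs (sepd_asymm hε hs)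
    omega
  · intro hc
    by_contra hcB
    have h1 := hmax c hc
    have hs : sepd (cuts ε z) a c := ⟨B, hB, haB, hcB⟩
    have h2 := rk_lt_of_sepd hs (sepd_asymm hε hs)
    omega

/-- Gap lemma: points that are not separated at scale `ε` are at distance at most `n ε`. -/
theorem gap_lemma {ε : ℝ} (hε : 0 ≤ ε) {z : Fin n → ℂ} {i j : Fin n}
    (h : ¬ sepd (cuts ε z) i j) : (z j).re - (z i).re ≤ n * ε := by
  by_contra! hgap
  have hex : ∃ k : Fin n, ∀ m, ¬ ((z i).re + k * ε < (z m).re ∧ (z m).re ≤ (z i).re + (k + 1) * ε) := by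
    by_contra! hcon
    choose f hf1 hf2 using hcon
    have hinj : Function.Injective f := by
      have hlt : ∀ k l : Fin n, k < l → f k ≠ f l := by
        intro k l hkl he
        have h1 := hf2 k
        have h2 := hf1 l
        rw [he] at h1
        have h3 : ((k : ℕ) : ℝ) + 1 ≤ (l : ℕ) := by exact_mod_cast hkl
        nlinarith
      intro k l he
      rcases lt_trichotomy k l with h | h | h
      · exact absurd he (hlt k l h)
      · exact h
      · exact absurd he.symm (hlt l k h)
    obtain ⟨k, hk⟩ := (Finite.injective_iff_surjective.1 hinj) i
    have h1 := hf1 k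
    rw [hk] at h1
    have : (0 : ℝ) ≤ ((k : ℕ) : ℝ) * ε := by positivity
    linarith
  obtain ⟨k, hk⟩ := hex
  have hk0 : (0 : ℝ) ≤ ((k : ℕ) : ℝ) * ε := by positivity
  have hkn : ((k : ℕ) : ℝ) * ε ≤ n * ε := by
    apply mul_le_mul_of_nonneg_right _ hε
    exact_mod_cast k.2.le
  apply h
  refine ⟨Finset.univ.filter (fun m => (z m).re ≤ (z i).re + k * ε), ?_, ?_, ?_⟩
  · rw [mem_cuts]
    refine ⟨⟨i, by simp [hk0]⟩, ?_, ?_⟩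
    · intro hu
      have : j ∈ Finset.univ.filter (fun m => (z m).re ≤ (z i).re + k * ε) := by rw [hu]; simp
      simp only [Finset.mem_filter, Finset.mem_univ, true_and] at this
      linarith
    · intro a ha b hb
      simp only [Finset.mem_filter, Finset.mem_univ, true_and, not_le] at ha hb
      have := hk b
      simp only [not_and, not_le] at this
      have := this hb
      linarith
  · simp [hk0]
  · simp only [Finset.mem_filter, Finset.mem_univ, true_and, not_le]
    linarith

/-- Vertical pairs of a combinatorial type. -/
def CT.T (p : CT n) : Finset (Fin n × Fin n) := OrderDual.ofDual p.2

theorem CT.T_anti {p q : CT n} (h : p ≤ q) : q.T ⊆ p.T := h.2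

/-- A type is good if it is realized by a normalized configuration whose real parts are the
block numbers. -/
def Good (i0 i1 : Fin n) (p : CT n) : Prop :=
  ∃ a ∈ NConf i0 i1, (∀ i, (a i).re = rk p.1 i) ∧ ctype 0 a = p

/-- Good at every valid scale. -/
theorem ctype_good {i0 i1 : Fin n} {ε : ℝ} (hε : 0 ≤ ε) {z : Fin n → ℂ} (hz : z ∈ NConf i0 i1)
    (hval : ∀ i j, i ≠ j → ¬ sepd (cuts ε z) i j → ¬ sepd (cuts ε z) j i → (z i).im ≠ (z j).im) :
    Good i0 i1 (ctype ε z) := by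
  let a : Fin n → ℂ := fun i => ⟨rk (cuts ε z) i, (z i).im⟩
  have hlt : ∀ {i j}, sepd (cuts ε z) i j → rk (cuts ε z) i < rk (cuts ε z) j :=
    fun h => rk_lt_of_sepd h (sepd_asymm hε h)
  have hne : i0 ≠ i1 := by
    intro h
    have := hz.2.2
    rw [h] at this
    exact lt_irrefl _ this
  have hcuts : cuts 0 a = cuts ε z := by
    ext A
    constructor
    · intro hA
      rw [mem_cuts] at hA
      obtain ⟨hA1, hA2, hA3⟩ := hA
      obtain ⟨x, hx, y, hy, hxy⟩ := exists_adjacent hε (z := z) hA1 hA2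
      have h1 := hA3 x hx y hy
      have h2 : rk (cuts ε z) x < rk (cuts ε z) y := by
        simpa [a] using h1
      have h3 : sepd (cuts ε z) x y := by
        by_contra hcon
        have := rk_le_of_not_sepd hcon
        omega
      obtain ⟨B, hB, hxB, hyB⟩ := h3
      rw [← hxy B hB hxB hyB]
      exact hB
    · intro hA
      have hA' := mem_cuts.1 hA
      rw [mem_cuts]
      refine ⟨hA'.1, hA'.2.1, ?_⟩
      intro x hx y hy
      have := hlt ⟨A, hA, hx, hy⟩
      simpa [a] using this
  refine ⟨a, ⟨?_, hz.2.1, ?_⟩, fun i => rfl, ?_⟩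
  · intro i j hij
    by_contra hne
    have hre : rk (cuts ε z) i = rk (cuts ε z) j := by
      have := congrArg Complex.re hij
      simpa [a] using this
    have him : (z i).im = (z j).im := by
      have := congrArg Complex.im hij
      simpa [a] using this
    refine hval i j hne (fun h => ?_) (fun h => ?_) him
    · have := hlt h; omega
    · have := hlt h; omega
  · have : sepd (cuts ε z) i0 i1 := by
      by_contra h
      refine hval i0 i1 hne h (fun h' => ?_) hz.2.1
      have := sepd_re h'
      linarith [hz.2.2]
    have := hlt this
    simpa [a] using this
  · have : vert (cuts ε z) a = vert (cuts ε z) z := by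
      ext ⟨i, j⟩
      simp [mem_vert, a]
    simp only [ctype, hcuts, this]

/-- The scale function. -/
noncomputable def delta (i0 : Fin n) (K : ℝ) (z : Fin n → ℂ) : ℝ :=
  (Finset.univ : Finset (Fin n × Fin n)).inf' (Finset.univ_nonempty_iff.2 ⟨(i0, i0)⟩)
    (fun q => if q.1 = q.2 then 1 / 2 else
      max (|(z q.1).re - (z q.2).re| / n) (|(z q.1).im - (z q.2).im| / K))

theorem delta_continuous (i0 : Fin n) (K : ℝ) : Continuous (delta i0 K) := by
  unfold delta
  refine Continuous.finset_inf'_apply _ ?_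
  rintro ⟨i, j⟩ _
  by_cases h : i = j
  · simp only [h, if_true]
    exact continuous_const
  · simp only [h, if_false]
    fun_prop

theorem delta_pos (i0 : Fin n) {K : ℝ} (hK : 0 < K) {z : Fin n → ℂ} (hz : Function.Injective z) :
    0 < delta i0 K z := by
  unfold delta
  rw [Finset.lt_inf'_iff]
  rintro ⟨i, j⟩ _
  have hn : (0 : ℝ) < n := by exact_mod_cast i0.pos
  by_cases h : i = j
  · simp [h]
  · simp only [h, if_false, lt_max_iff]
    by_contra! hcon
    have h1 : |(z i).re - (z j).re| = 0 := by
      refine le_antisymm ?_ (abs_nonneg _)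
      have := (div_le_iff₀ hn).1 hcon.1
      simpa using this
    have h2 : |(z i).im - (z j).im| = 0 := by
      refine le_antisymm ?_ (abs_nonneg _)
      have := (div_le_iff₀ hK).1 hcon.2
      simpa using this
    rw [abs_eq_zero, sub_eq_zero] at h1 h2
    exact h (hz (Complex.ext h1 h2))

theorem delta_le_half (i0 : Fin n) (K : ℝ) (z : Fin n → ℂ) : delta i0 K z ≤ 1 / 2 := by
  have := Finset.inf'_le (s := (Finset.univ : Finset (Fin n × Fin n)))
    (fun q : Fin n × Fin n => if q.1 = q.2 then (1 / 2 : ℝ) else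
      max (|(z q.1).re - (z q.2).re| / n) (|(z q.1).im - (z q.2).im| / K))
    (Finset.mem_univ (i0, i0))
  refine le_trans this ?_
  simp

/-- Below the scale `delta`, nonseparated points have large vertical distance. -/
theorem delta_valid (i0 : Fin n) {K : ℝ} (hK : 0 < K) {z : Fin n → ℂ} {ε : ℝ} (hε : 0 ≤ ε)
    (hd : ε < delta i0 K z) {i j : Fin n} (hij : i ≠ j) (h1 : ¬ sepd (cuts ε z) i j)
    (h2 : ¬ sepd (cuts ε z) j i) : K * ε < |(z i).im - (z j).im| := by
  have hn : (0 : ℝ) < n := by exact_mod_cast i0.pos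
  have h := Finset.inf'_le (s := (Finset.univ : Finset (Fin n × Fin n)))
    (fun q : Fin n × Fin n => if q.1 = q.2 then (1 / 2 : ℝ) else
      max (|(z q.1).re - (z q.2).re| / n) (|(z q.1).im - (z q.2).im| / K))
    (Finset.mem_univ (i, j))
  simp only [hij, if_false] at h
  have h' := lt_of_lt_of_le hd h
  rw [lt_max_iff] at h'
  have g1 := gap_lemma hε h1
  have g2 := gap_lemma hε h2
  rcases h' with h' | h'
  · exfalso
    rw [lt_div_iff₀ hn] at h'
    have : |(z i).re - (z j).re| ≤ n * ε := by
      rw [abs_le]; constructor <;> linarith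
    linarith
  · rw [lt_div_iff₀ hK] at h'
    linarith

theorem delta_good {i0 i1 : Fin n} {K : ℝ} (hK : 0 < K) {z : Fin n → ℂ} (hz : z ∈ NConf i0 i1)
    {ε : ℝ} (hε : 0 ≤ ε) (hd : ε < delta i0 K z) : Good i0 i1 (ctype ε z) := by
  refine ctype_good hε hz ?_
  intro i j hij h1 h2 he
  have h := delta_valid i0 hK hε hd hij h1 h2
  rw [he] at h
  simp only [sub_self, abs_zero] at h
  have : 0 ≤ K * ε := by positivity
  linarith

/-- The open stratum of type `q`. -/
def InS (i0 i1 : Fin n) (q : CT n) (z : Fin n → ℂ) : Prop :=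
  (∀ i j, sepd q.1 i j → (z i).re < (z j).re) ∧
  (∀ i j, (i, j) ∈ q.T → (z i).re = (z j).re ∧ (z i).im < (z j).im) ∧ (z i0).im = (z i1).im

/-- The weak stratum of type `q`. -/
def InW (i0 i1 : Fin n) (q : CT n) (z : Fin n → ℂ) : Prop :=
  (∀ i j, sepd q.1 i j → (z i).re ≤ (z j).re) ∧
  (∀ i j, (i, j) ∈ q.T → (z i).re = (z j).re ∧ (z i).im < (z j).im) ∧ (z i0).im = (z i1).im

theorem ctype_T (ε : ℝ) (z : Fin n → ℂ) : (ctype ε z).T = vert (cuts ε z) z := rfl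

theorem inS_self {i0 i1 : Fin n} {z : Fin n → ℂ} (hz : z ∈ NConf i0 i1) :
    InS i0 i1 (ctype 0 z) z := by
  refine ⟨fun i j h => ?_, fun i j h => ?_, hz.2.1⟩
  · have := sepd_re h
    linarith
  · rw [ctype_T, mem_vert] at h
    have h1 := gap_lemma le_rfl h.1
    have h2 := gap_lemma le_rfl h.2.1
    exact ⟨by linarith, h.2.2⟩

theorem Good.total {i0 i1 : Fin n} {p : CT n} (hp : Good i0 i1 p) {i j : Fin n} (hij : i ≠ j) :
    sepd p.1 i j ∨ sepd p.1 j i ∨ (i, j) ∈ p.T ∨ (j, i) ∈ p.T := by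
  obtain ⟨a, ha, -, rfl⟩ := hp
  by_cases h1 : sepd (cuts 0 a) i j
  · exact Or.inl h1
  by_cases h2 : sepd (cuts 0 a) j i
  · exact Or.inr (Or.inl h2)
  refine Or.inr (Or.inr ?_)
  have g1 := gap_lemma le_rfl h1
  have g2 := gap_lemma le_rfl h2
  have hre : (a i).re = (a j).re := by linarith
  simp only [ctype_T, mem_vert]
  rcases lt_trichotomy (a i).im (a j).im with h | h | h
  · exact Or.inl ⟨h1, h2, h⟩
  · exact absurd (ha.1 (Complex.ext hre h)) hij
  · exact Or.inr ⟨h2, h1, h⟩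

theorem Good.sepd01 {i0 i1 : Fin n} {p : CT n} (hp : Good i0 i1 p) : sepd p.1 i0 i1 := by
  obtain ⟨a, ha, -, rfl⟩ := hp
  by_contra h
  have := gap_lemma le_rfl h
  linarith [ha.2.2]

theorem Good.asymm {i0 i1 : Fin n} {p : CT n} (hp : Good i0 i1 p) {i j : Fin n}
    (h : sepd p.1 i j) : ¬ sepd p.1 j i := by
  obtain ⟨a, ha, -, rfl⟩ := hp
  exact sepd_asymm le_rfl h

theorem Good.T_spec {i0 i1 : Fin n} {p : CT n} (hp : Good i0 i1 p) {i j : Fin n}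
    (h : (i, j) ∈ p.T) : ¬ sepd p.1 i j ∧ ¬ sepd p.1 j i ∧ (j, i) ∉ p.T := by
  obtain ⟨a, ha, -, rfl⟩ := hp
  rw [ctype_T, mem_vert] at h
  refine ⟨h.1, h.2.1, fun h' => ?_⟩
  rw [ctype_T, mem_vert] at h'
  linarith [h.2.2, h'.2.2]

theorem Good.inS_mem {i0 i1 : Fin n} {q : CT n} (hq : Good i0 i1 q) {z : Fin n → ℂ}
    (hz : InS i0 i1 q z) : z ∈ NConf i0 i1 := by
  refine ⟨?_, hz.2.2, hz.1 _ _ hq.sepd01⟩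
  intro i j he
  by_contra hij
  rcases hq.total hij with h | h | h | h
  · exact (hz.1 _ _ h).ne (by rw [he])
  · exact (hz.1 _ _ h).ne (by rw [he])
  · exact (hz.2.1 _ _ h).2.ne (by rw [he])
  · exact (hz.2.1 _ _ h).2.ne (by rw [he])

theorem Good.eq_of_le {i0 i1 : Fin n} {p q : CT n} (hp : Good i0 i1 p) (hq : Good i0 i1 q)
    (hL : p.1 = q.1) (hT : q.T ⊆ p.T) : p = q := by
  refine Prod.ext hL ?_
  change p.T = q.T
  refine Finset.Subset.antisymm ?_ hT
  rintro ⟨i, j⟩ h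
  have hs := hp.T_spec h
  have hij : i ≠ j := by
    rintro rfl
    exact hs.2.2 h
  rw [hL] at hs
  rcases hq.total hij with h' | h' | h' | h'
  · exact absurd h' hs.1
  · exact absurd h' hs.2.1
  · exact h'
  · exact absurd (hT h') hs.2.2

/-- The index poset of good combinatorial types. -/
abbrev PT (i0 i1 : Fin n) : Type := {p : CT n // Good i0 i1 p}

noncomputable instance (i0 i1 : Fin n) : Fintype (PT i0 i1) :=
  Fintype.ofFinite _

/-- The chosen realization of a good type. -/
noncomputable def apex {i0 i1 : Fin n} (p : PT i0 i1) : Fin n → ℂ := p.2.choose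

theorem apex_mem {i0 i1 : Fin n} (p : PT i0 i1) : apex p ∈ NConf i0 i1 := p.2.choose_spec.1

theorem apex_re {i0 i1 : Fin n} (p : PT i0 i1) (i : Fin n) : (apex p i).re = rk p.1.1 i :=
  p.2.choose_spec.2.1 i

theorem apex_ctype {i0 i1 : Fin n} (p : PT i0 i1) : ctype 0 (apex p) = p.1 :=
  p.2.choose_spec.2.2

theorem apex_inS {i0 i1 : Fin n} (p : PT i0 i1) : InS i0 i1 p.1 (apex p) := by
  have := inS_self (apex_mem p)
  rwa [apex_ctype] at this

theorem apex_inW {i0 i1 : Fin n} {p q : PT i0 i1} (h : p ≤ q) : InW i0 i1 q.1 (apex p) := by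
  have h' : p.1 ≤ q.1 := h
  refine ⟨fun i j hs => ?_, fun i j hs => ?_, (apex_mem p).2.1⟩
  · rw [apex_re, apex_re]
    have : ¬ sepd p.1.1 j i := fun hs' => q.2.asymm hs (sepd_mono h'.1 hs')
    exact_mod_cast rk_le_of_not_sepd this
  · exact (apex_inS p).2.1 i j (CT.T_anti h' hs)

/-- Realization of formal combinations. -/
noncomputable def comb {i0 i1 : Fin n} (w : PT i0 i1 → ℝ) : Fin n → ℂ :=
  fun i => ∑ p, (w p : ℂ) * apex p i

theorem comb_re {i0 i1 : Fin n} (w : PT i0 i1 → ℝ) (i : Fin n) :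
    (comb w i).re = ∑ p, w p * (apex p i).re := by
  simp [comb]

theorem comb_im {i0 i1 : Fin n} (w : PT i0 i1 → ℝ) (i : Fin n) :
    (comb w i).im = ∑ p, w p * (apex p i).im := by
  simp [comb]

theorem comb_inS {i0 i1 : Fin n} {w : PT i0 i1 → ℝ} (h0 : ∀ p, 0 ≤ w p) {q : PT i0 i1}
    (hq : w q ≠ 0) (hle : ∀ p, w p ≠ 0 → p ≤ q) : InS i0 i1 q.1 (comb w) := by
  have hq' : 0 < w q := lt_of_le_of_ne (h0 q) (Ne.symm hq)
  refine ⟨fun i j hs => ?_, fun i j hs => ⟨?_, ?_⟩, ?_⟩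
  · rw [comb_re, comb_re]
    refine Finset.sum_lt_sum (fun p _ => ?_) ⟨q, Finset.mem_univ _, ?_⟩
    · by_cases hp : w p = 0
      · simp [hp]
      · exact mul_le_mul_of_nonneg_left ((apex_inW (hle p hp)).1 i j hs) (h0 p)
    · exact mul_lt_mul_of_pos_left ((apex_inS q).1 i j hs) hq'
  · rw [comb_re, comb_re]
    refine Finset.sum_congr rfl (fun p _ => ?_)
    by_cases hp : w p = 0
    · simp [hp]
    · rw [((apex_inW (hle p hp)).2.1 i j hs).1]
  · rw [comb_im, comb_im]
    refine Finset.sum_lt_sum (fun p _ => ?_) ⟨q, Finset.mem_univ _, ?_⟩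
    · by_cases hp : w p = 0
      · simp [hp]
      · exact mul_le_mul_of_nonneg_left ((apex_inW (hle p hp)).2.1 i j hs).2.le (h0 p)
    · exact mul_lt_mul_of_pos_left ((apex_inS q).2.1 i j hs).2 hq'
  · rw [comb_im, comb_im]
    refine Finset.sum_congr rfl (fun p _ => ?_)
    rw [(apex_mem p).2.1]

theorem inS_segment {i0 i1 : Fin n} {q : CT n} {z z' : Fin n → ℂ} (hz : InS i0 i1 q z)
    (hz' : InS i0 i1 q z') {s : ℝ} (hs0 : 0 ≤ s) (hs1 : s ≤ 1) :
    InS i0 i1 q (fun i => ((1 - s : ℝ) : ℂ) * z i + (s : ℂ) * z' i) := by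
  have key : ∀ a b a' b' : ℝ, a < b → a' < b' → (1 - s) * a + s * a' < (1 - s) * b + s * b' := by
    intro a b a' b' h h'
    rcases hs0.eq_or_lt with rfl | h0
    · simpa using h
    · have := mul_lt_mul_of_pos_left h' h0
      have := mul_le_mul_of_nonneg_left h.le (sub_nonneg.2 hs1)
      linarith
  refine ⟨fun i j h => ?_, fun i j h => ⟨?_, ?_⟩, ?_⟩
  · simpa using key _ _ _ _ (hz.1 i j h) (hz'.1 i j h)
  · simp [(hz.2.1 i j h).1, (hz'.2.1 i j h).1]
  · simpa using key _ _ _ _ (hz.2.1 i j h).2 (hz'.2.1 i j h).2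
  · simp [hz.2.2, hz'.2.2]

theorem exists_top {P : Type} [Fintype P] [PartialOrder P] {w : P → ℝ} (hw : w ∈ OrdCx P) :
    ∃ q, w q ≠ 0 ∧ ∀ p, w p ≠ 0 → p ≤ q := by
  classical
  obtain ⟨h0, h1, h2⟩ := hw
  have hne : (Finset.univ.filter (fun p => w p ≠ 0)).Nonempty := by
    by_contra hcon
    rw [Finset.not_nonempty_iff_eq_empty, Finset.filter_eq_empty_iff] at hcon
    have : ∑ p, w p = 0 := Finset.sum_eq_zero fun p hp => not_not.1 (hcon hp)
    linarith
  obtain ⟨q, hq⟩ := Finset.exists_maximal hne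
  have hq1 := (Finset.mem_filter.1 hq.1).2
  refine ⟨q, hq1, fun p hp => ?_⟩
  rcases h2 p q hp hq1 with h | h
  · exact h
  · exact hq.2 (by simp [hp]) h

theorem comb_mem {i0 i1 : Fin n} {w : PT i0 i1 → ℝ} (hw : w ∈ OrdCx (PT i0 i1)) :
    comb w ∈ NConf i0 i1 := by
  obtain ⟨q, hq, hle⟩ := exists_top hw
  exact q.2.inS_mem (comb_inS hw.1 hq hle)

theorem exists_level {P : Type} [Fintype P] [PartialOrder P] [DecidableLE P] [DecidableLT P]
    {w : P → ℝ} (hw : w ∈ OrdCx P)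
    {ε : ℝ} (hε : 0 ≤ ε) (hε1 : ε < 1) :
    ∃ p, w p ≠ 0 ∧ (∑ p', if p < p' then w p' else 0) ≤ ε ∧
      ε < (∑ p', if p ≤ p' then w p' else 0) := by
  classical
  obtain ⟨q, hq, hqle⟩ := exists_top hw
  obtain ⟨h0, h1, h2⟩ := hw
  have hne : (Finset.univ.filter
      (fun p => w p ≠ 0 ∧ (∑ p', if p < p' then w p' else 0) ≤ ε)).Nonempty := by
    refine ⟨q, ?_⟩
    simp only [Finset.mem_filter, Finset.mem_univ, true_and]
    refine ⟨hq, ?_⟩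
    rw [Finset.sum_eq_zero]
    · exact hε
    · intro p _
      split_ifs with h
      · by_contra hp
        exact absurd (hqle p hp) (not_le_of_gt h)
      · rfl
  obtain ⟨p, hp⟩ := Finset.exists_minimal hne
  have hp1 := (Finset.mem_filter.1 hp.1).2
  refine ⟨p, hp1.1, hp1.2, ?_⟩
  by_contra! hm
  rcases (Finset.univ.filter (fun p' => w p' ≠ 0 ∧ p' < p)).eq_empty_or_nonempty with hB | hB
  · rw [Finset.filter_eq_empty_iff] at hB
    have : ∑ p', (if p ≤ p' then w p' else 0) = ∑ p', w p' := by
      refine Finset.sum_congr rfl fun p' _ => ?_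
      split_ifs with h
      · rfl
      · by_contra hne
        have hne' : w p' ≠ 0 := fun h => hne h.symm
        rcases h2 p p' hp1.1 hne' with h' | h'
        · exact h h'
        · refine hB (Finset.mem_univ p') ⟨hne', lt_of_le_of_ne h' ?_⟩
          rintro rfl
          exact h le_rfl
    linarith
  · obtain ⟨r, hr⟩ := Finset.exists_maximal hB
    have hr1 := (Finset.mem_filter.1 hr.1).2
    have hle : (∑ p', if r < p' then w p' else 0) ≤ ∑ p', if p ≤ p' then w p' else 0 := by
      refine Finset.sum_le_sum fun p' _ => ?_
      by_cases h : p ≤ p'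
      · simp only [h, if_true]
        split_ifs
        · exact le_rfl
        · exact h0 p'
      · simp only [h, if_false]
        split_ifs with h'
        · by_contra hne
          have hne' : w p' ≠ 0 := fun h => hne h.le
          rcases h2 p p' hp1.1 hne' with h'' | h''
          · exact h h''
          · have hlt : p' < p := lt_of_le_of_ne h'' (by rintro rfl; exact h le_rfl)
            have := hr.2 (y := p') (by simp [hne', hlt]) h'.le
            exact absurd h' (not_lt_of_ge this)
        · exact le_rfl
    have hrS := hp.2 (y := r) (by simp only [Finset.mem_filter, Finset.mem_univ, true_and]; exact ⟨hr1.1, hle.trans hm⟩) hr1.2.le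
    exact absurd hr1.2 (not_lt_of_ge hrS)

theorem Good.re_lt {i0 i1 : Fin n} {q : CT n} (hq : Good i0 i1 q) {z z' : Fin n → ℂ}
    (hz : InS i0 i1 q z) (hz' : InS i0 i1 q z') {a b : Fin n} (h : (z a).re < (z b).re) :
    (z' a).re < (z' b).re := by
  have hab : a ≠ b := by
    rintro rfl
    exact lt_irrefl _ h
  rcases hq.total hab with h' | h' | h' | h'
  · exact hz'.1 _ _ h'
  · have := hz.1 _ _ h'
    linarith
  · have := (hz.2.1 _ _ h').1
    linarith
  · have := (hz.2.1 _ _ h').1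
    linarith

theorem cuts_of_inS {i0 i1 : Fin n} {q : PT i0 i1} {z : Fin n → ℂ} (hz : InS i0 i1 q.1 z) :
    cuts 0 z = q.1.1 := by
  have h : cuts 0 z = cuts 0 (apex q) := by
    apply cuts_congr
    intro a b
    simp only [add_zero]
    exact ⟨q.2.re_lt hz (apex_inS q), q.2.re_lt (apex_inS q) hz⟩
  rw [h]
  exact congrArg Prod.fst (apex_ctype q)

theorem ctype_comb {i0 i1 : Fin n} {w : PT i0 i1 → ℝ} (hw : w ∈ OrdCx (PT i0 i1)) {K : ℝ}
    (hK : 0 < K) (hKb : ∀ (p : PT i0 i1) i j, |(apex p i).im - (apex p j).im| ≤ K)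
    {ε : ℝ} (hε : 0 ≤ ε) (hd : ε < delta i0 K (comb w)) :
    ∃ p, w p ≠ 0 ∧ ctype ε (comb w) = p.1 := by
  classical
  have hε1 : ε < 1 := by linarith [delta_le_half i0 K (comb w)]
  obtain ⟨r, hr, hM, hm⟩ := exists_level hw hε hε1
  obtain ⟨q, hq, hqle⟩ := exists_top hw
  have hgood := delta_good hK (comb_mem hw) hε hd
  have hzS := comb_inS hw.1 hq hqle
  have hz0 := cuts_of_inS hzS
  obtain ⟨h0, h1, h2⟩ := hw
  have hrq : r.1 ≤ q.1 := hqle r hr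
  refine ⟨r, hr, ?_⟩
  have hL : r.1.1 = cuts ε (comb w) := by
    apply Finset.Subset.antisymm
    · intro A hA
      have hA0 : A ∈ cuts 0 (apex r) := by
        have := congrArg Prod.fst (apex_ctype r)
        change cuts 0 (apex r) = r.1.1 at this
        rwa [this]
      have hA' := mem_cuts.1 hA0
      rw [mem_cuts]
      refine ⟨hA'.1, hA'.2.1, fun a ha b hb => ?_⟩
      have : (∑ p', if r ≤ p' then w p' else 0) ≤ (comb w b).re - (comb w a).re := by
        rw [comb_re, comb_re, ← Finset.sum_sub_distrib]
        refine Finset.sum_le_sum fun p _ => ?_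
        by_cases hp : w p = 0
        · simp [hp]
        rw [← mul_sub]
        split_ifs with hrp
        · have hs : sepd p.1.1 a b := ⟨A, (show r.1 ≤ p.1 from hrp).1 hA, ha, hb⟩
          have hlt := (apex_inS p).1 a b hs
          rw [apex_re, apex_re] at *
          have : ((rk p.1.1 a : ℕ) : ℝ) + 1 ≤ (rk p.1.1 b : ℕ) := by exact_mod_cast hlt
          have h0p := h0 p
          nlinarith
        · have := (apex_inW (hqle p hp)).1 a b ⟨A, hrq.1 hA, ha, hb⟩
          exact mul_nonneg (h0 p) (by linarith)
      linarith
    · intro A hA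
      by_contra hAr
      have hA' := mem_cuts.1 hA
      obtain ⟨a, ha, b, hb, hab⟩ := exists_adjacent le_rfl (z := comb w) hA'.1 hA'.2.1
      have hx := hA'.2.2 a ha b hb
      rw [hz0] at hab
      have : (comb w b).re - (comb w a).re ≤ ∑ p', if r < p' then w p' else 0 := by
        rw [comb_re, comb_re, ← Finset.sum_sub_distrib]
        refine Finset.sum_le_sum fun p _ => ?_
        by_cases hp : w p = 0
        · simp [hp]
        rw [← mul_sub, apex_re, apex_re]
        have hpq : p.1 ≤ q.1 := hqle p hp
        have h0p := h0 p
        split_ifs with hrp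
        · have : rk p.1.1 b ≤ rk p.1.1 a + 1 := by
            unfold rk
            refine le_trans (Finset.card_le_card ?_) (Finset.card_insert_le A _)
            intro B hB
            rw [Finset.mem_filter] at hB
            rw [Finset.mem_insert, Finset.mem_filter]
            by_cases haB : a ∈ B
            · exact Or.inl (hab B (hpq.1 hB.1) haB hB.2)
            · exact Or.inr ⟨hB.1, haB⟩
          have : ((rk p.1.1 b : ℕ) : ℝ) ≤ (rk p.1.1 a : ℕ) + 1 := by exact_mod_cast this
          nlinarith
        · have hpr : p ≤ r := by
            rcases h2 p r hp hr with h | h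
            · exact h
            · by_contra hcon
              exact hrp (lt_of_le_not_ge h hcon)
          have hpr' : p.1 ≤ r.1 := hpr
          have : rk p.1.1 b ≤ rk p.1.1 a := by
            apply rk_le_of_not_sepd
            rintro ⟨B, hB, haB, hbB⟩
            have := hab B (hpq.1 hB) haB hbB
            rw [this] at hB
            exact hAr (hpr'.1 hB)
          have : ((rk p.1.1 b : ℕ) : ℝ) ≤ (rk p.1.1 a : ℕ) := by exact_mod_cast this
          nlinarith
      linarith
  symm
  refine r.2.eq_of_le hgood hL ?_
  rintro ⟨i, j⟩ hij
  rw [ctype_T, mem_vert] at hij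
  have hne : i ≠ j := by
    rintro rfl
    exact lt_irrefl _ hij.2.2
  have hval := delta_valid i0 hK hε hd hne hij.1 hij.2.1
  rcases r.2.total hne with h | h | h | h
  · rw [hL] at h
    exact absurd h hij.1
  · rw [hL] at h
    exact absurd h hij.2.1
  · exact h
  · exfalso
    rw [abs_sub_comm, abs_of_pos (by linarith [hij.2.2])] at hval
    have : (comb w j).im - (comb w i).im ≤ K * ∑ p', if r < p' then w p' else 0 := by
      rw [comb_im, comb_im, ← Finset.sum_sub_distrib, Finset.mul_sum]
      refine Finset.sum_le_sum fun p _ => ?_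
      by_cases hp : w p = 0
      · simp [hp]
      rw [← mul_sub]
      have h0p := h0 p
      split_ifs with hrp
      · rw [mul_comm]
        exact mul_le_mul_of_nonneg_right ((le_abs_self _).trans (hKb p j i)) h0p
      · have hpr : p ≤ r := by
          rcases h2 p r hp hr with h | h
          · exact h
          · by_contra hcon
            exact hrp (lt_of_le_not_ge h hcon)
        have := ((apex_inW hpr).2.1 j i h).2
        nlinarith
    nlinarith

/-- Dimension bound. -/
theorem chain_card {i0 i1 : Fin n} (c : Finset (PT i0 i1))
    (hc : ∀ p ∈ c, ∀ q ∈ c, p ≤ q ∨ q ≤ p) : c.card ≤ n - 1 := by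
  classical
  have hcard : ∀ p : PT i0 i1, p.1.1.card ∈ Finset.Icc 1 (n - 1) := by
    intro p
    rw [Finset.mem_Icc]
    constructor
    · obtain ⟨A, hA, -⟩ := p.2.sepd01
      exact Finset.card_pos.2 ⟨A, hA⟩
    · have hL : p.1.1 = cuts 0 (apex p) := (congrArg Prod.fst (apex_ctype p)).symm
      have : p.1.1.card ≤ (Finset.Icc 1 (n - 1)).card := by
        refine Finset.card_le_card_of_injOn Finset.card ?_ ?_
        · intro A hA
          rw [Finset.mem_coe, hL, mem_cuts] at hA
          have h1 := Finset.card_pos.2 hA.1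
          have h2 := (Finset.card_lt_iff_ne_univ A).2 hA.2.1
          rw [Fintype.card_fin] at h2
          simp only [Finset.coe_Icc, Set.mem_Icc]
          omega
        · intro A hA B hB hAB
          have key : A ⊆ B ∨ B ⊆ A := by
            by_contra! hcon
            obtain ⟨⟨a, ha, hab⟩, ⟨b, hb, hba⟩⟩ := And.imp Finset.not_subset.1 Finset.not_subset.1 hcon
            exact p.2.asymm ⟨A, hA, ha, hba⟩ ⟨B, hB, hb, hab⟩
          rcases key with h | h
          · exact Finset.eq_of_subset_of_card_le h (le_of_eq hAB.symm)
          · exact (Finset.eq_of_subset_of_card_le h (le_of_eq hAB)).symm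
      simpa using this
  have : c.card ≤ (Finset.Icc 1 (n - 1)).card := by
    refine Finset.card_le_card_of_injOn (fun p => p.1.1.card) (fun p _ => hcard p) ?_
    intro p hp q hq hpq
    have key : ∀ p q : PT i0 i1, p ≤ q → p.1.1.card = q.1.1.card → p = q := by
      intro p q h hpq
      have h' : p.1 ≤ q.1 := h
      apply Subtype.ext
      exact p.2.eq_of_le q.2 (Finset.eq_of_subset_of_card_le h'.1 hpq.ge) (CT.T_anti h')
    rcases hc p hp q hq with h | h
    · exact key p q h hpq
    · exact (key q p h hpq.symm).symm
  simpa using this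

open MeasureTheory in
/-- The weight of the type `p` at the configuration `z`. -/
noncomputable def wt (i0 : Fin n) (K : ℝ) (z : Fin n → ℂ) (p : CT n) : ℝ :=
  ∫ t in Set.Ioo (0 : ℝ) 1,
    Set.indicator {t : ℝ | ctype (t * delta i0 K z) z = p} (fun _ => (1 : ℝ)) t

theorem wt_measurable (i0 : Fin n) {K : ℝ} {z : Fin n → ℂ} (hδ : 0 ≤ delta i0 K z) (p : CT n) :
    MeasurableSet {t : ℝ | ctype (t * delta i0 K z) z = p} := by
  apply Set.OrdConnected.measurableSet
  refine ⟨fun x hx y hy t ht => ?_⟩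
  have h1 := ctype_anti z (mul_le_mul_of_nonneg_right ht.1 hδ)
  have h2 := ctype_anti z (mul_le_mul_of_nonneg_right ht.2 hδ)
  simp only [Set.mem_ofPred_eq] at hx hy
  simp only [hx, hy] at h1 h2
  exact le_antisymm h1 h2

theorem eventually_sign {X : Type*} [TopologicalSpace X] {u : X → ℝ} {x0 : X}
    (hu : ContinuousAt u x0) (h : u x0 ≠ 0) : ∀ᶠ x in nhds x0, (0 < u x ↔ 0 < u x0) := by
  rcases lt_or_gt_of_ne h with h | h
  · filter_upwards [hu.eventually (gt_mem_nhds h)] with x hx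
    constructor <;> intro <;> linarith
  · filter_upwards [hu.eventually (lt_mem_nhds h)] with x hx
    exact ⟨fun _ => h, fun _ => hx⟩

theorem ctype_locconst {i0 i1 : Fin n} {K : ℝ} (hK : 0 < K) {z0 : Fin n → ℂ}
    (hz0 : z0 ∈ NConf i0 i1) {t : ℝ} (ht0 : 0 ≤ t) (ht1 : t < 1)
    (hgen : ∀ a b, (z0 b).re - (z0 a).re ≠ t * delta i0 K z0) :
    ∀ᶠ z in nhds z0, ctype (t * delta i0 K z) z = ctype (t * delta i0 K z0) z0 := by
  have hδ := delta_pos i0 hK hz0.1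
  have hε : 0 ≤ t * delta i0 K z0 := by positivity
  have hd : t * delta i0 K z0 < delta i0 K z0 := by nlinarith
  have hdc := delta_continuous i0 K
  have h1 : ∀ᶠ z in nhds z0, ∀ a b, (0 < (z b).re - (z a).re - t * delta i0 K z ↔
      0 < (z0 b).re - (z0 a).re - t * delta i0 K z0) := by
    rw [Filter.eventually_all]
    intro a
    rw [Filter.eventually_all]
    intro b
    refine eventually_sign (u := fun z : Fin n → ℂ => (z b).re - (z a).re - t * delta i0 K z) ?_ ?_
    · apply Continuous.continuousAt
      fun_prop
    · exact sub_ne_zero.2 (hgen a b)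
  have h2 : ∀ᶠ z in nhds z0, ∀ i j, (i ≠ j ∧ ¬ sepd (cuts (t * delta i0 K z0) z0) i j ∧
      ¬ sepd (cuts (t * delta i0 K z0) z0) j i) → (0 < (z j).im - (z i).im ↔
      0 < (z0 j).im - (z0 i).im) := by
    rw [Filter.eventually_all]
    intro i
    rw [Filter.eventually_all]
    intro j
    by_cases hc : i ≠ j ∧ ¬ sepd (cuts (t * delta i0 K z0) z0) i j ∧
      ¬ sepd (cuts (t * delta i0 K z0) z0) j i
    · have hv := delta_valid i0 hK hε hd hc.1 hc.2.1 hc.2.2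
      have hne : (z0 j).im - (z0 i).im ≠ 0 := by
        intro h0
        rw [abs_sub_comm, h0, abs_zero] at hv
        have : 0 ≤ K * (t * delta i0 K z0) := by positivity
        linarith
      filter_upwards [eventually_sign (u := fun z : Fin n → ℂ => (z j).im - (z i).im) (x0 := z0)
        (by apply Continuous.continuousAt; fun_prop) hne] with z hz _
      exact hz
    · exact Filter.Eventually.of_forall fun z h => absurd h hc
  filter_upwards [h1, h2] with z hz1 hz2
  have hcuts : cuts (t * delta i0 K z) z = cuts (t * delta i0 K z0) z0 := by
    apply cuts_congr
    intro a b
    have := hz1 a b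
    constructor
    · intro h
      linarith [this.1 (by linarith)]
    · intro h
      linarith [this.2 (by linarith)]
  have hvert : vert (cuts (t * delta i0 K z0) z0) z = vert (cuts (t * delta i0 K z0) z0) z0 := by
    ext ⟨i, j⟩
    rw [mem_vert, mem_vert]
    refine and_congr_right fun g1 => and_congr_right fun g2 => ?_
    by_cases hij : i = j
    · subst hij; simp
    · have := hz2 i j ⟨hij, g1, g2⟩
      rwa [sub_pos, sub_pos] at this
  simp only [ctype, hcuts, hvert]

open MeasureTheory in
theorem wt_continuousAt {i0 i1 : Fin n} {K : ℝ} (hK : 0 < K) {z0 : Fin n → ℂ}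
    (hz0 : z0 ∈ NConf i0 i1) (p : CT n) : ContinuousAt (fun z => wt i0 K z p) z0 := by
  have hδ := delta_pos i0 hK hz0.1
  unfold wt
  refine continuousAt_of_dominated (bound := fun _ => 1) ?_ ?_ ?_ ?_
  · filter_upwards [(delta_continuous i0 K).continuousAt.eventually (lt_mem_nhds hδ)] with z hz
    exact ((measurable_const (a := (1 : ℝ))).indicator
      (wt_measurable i0 (le_of_lt hz) p)).aestronglyMeasurable
  · refine Filter.Eventually.of_forall fun z => Filter.Eventually.of_forall fun t => ?_
    rw [Set.indicator_apply]
    split_ifs <;> simp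
  · exact integrable_const _
  · have hfin : (Set.range (fun q : Fin n × Fin n =>
        ((z0 q.2).re - (z0 q.1).re) / delta i0 K z0)).Finite := Set.finite_range _
    have hae : ∀ᵐ t ∂(volume.restrict (Set.Ioo (0 : ℝ) 1)),
        t ∉ Set.range (fun q : Fin n × Fin n =>
        ((z0 q.2).re - (z0 q.1).re) / delta i0 K z0) :=
      ae_restrict_of_ae (hfin.countable.ae_notMem volume)
    filter_upwards [hae, ae_restrict_mem measurableSet_Ioo] with t ht ht01
    have hev := ctype_locconst hK hz0 ht01.1.le ht01.2 (fun a b h => ht ⟨(a, b), by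
      simp only
      rw [h]
      field_simp⟩)
    refine ContinuousAt.congr (f := fun _ => Set.indicator
      {t : ℝ | ctype (t * delta i0 K z0) z0 = p} (fun _ => (1 : ℝ)) t) continuousAt_const ?_
    filter_upwards [hev] with z hz
    simp only [Set.indicator_apply, Set.mem_ofPred_eq, hz]

theorem wt_support {i0 : Fin n} {K : ℝ} {z : Fin n → ℂ} {p : CT n} (h : wt i0 K z p ≠ 0) :
    ∃ t ∈ Set.Ioo (0 : ℝ) 1, ctype (t * delta i0 K z) z = p := by
  by_contra! hcon
  apply h
  unfold wt
  apply MeasureTheory.setIntegral_eq_zero_of_forall_eq_zero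
  intro t ht
  rw [Set.indicator_of_notMem]
  exact hcon t ht

open MeasureTheory in
theorem wt_ne_zero {i0 i1 : Fin n} {K : ℝ} (hK : 0 < K) {z : Fin n → ℂ}
    (hz : z ∈ NConf i0 i1) : wt i0 K z (ctype 0 z) ≠ 0 := by
  have hδ := delta_pos i0 hK hz.1
  have hev : ∀ᶠ t in nhdsWithin (0 : ℝ) (Set.Ioi 0), ctype (t * delta i0 K z) z = ctype 0 z := by
    have h1 : ∀ᶠ t in nhdsWithin (0 : ℝ) (Set.Ioi 0), ∀ a b,
        ((z a).re + t * delta i0 K z < (z b).re ↔ (z a).re + 0 < (z b).re) := by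
      rw [Filter.eventually_all]
      intro a
      rw [Filter.eventually_all]
      intro b
      by_cases h : (z a).re < (z b).re
      · have : ∀ᶠ t in nhds (0 : ℝ), (z a).re + t * delta i0 K z < (z b).re := by
          have hc : ContinuousAt (fun t : ℝ => (z a).re + t * delta i0 K z) 0 := by
            apply Continuous.continuousAt; fun_prop
          exact hc.eventually (gt_mem_nhds (by simpa using h))
        filter_upwards [nhdsWithin_le_nhds this] with t ht
        simp [ht, h]
      · filter_upwards [self_mem_nhdsWithin] with t ht
        have : 0 < t * delta i0 K z := mul_pos ht hδ
        constructor <;> intro <;> linarith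
    filter_upwards [h1] with t ht
    have := cuts_congr ht
    simp only [ctype, this]
  obtain ⟨u, hu, hsub⟩ := mem_nhdsGT_iff_exists_Ioo_subset.1 hev
  have hu0 : (0 : ℝ) < u := hu
  have hm : 0 < min u 1 := lt_min hu0 one_pos
  unfold wt
  rw [integral_indicator_const _ (wt_measurable i0 hδ.le _)]
  simp only [smul_eq_mul, mul_one]
  apply ne_of_gt
  rw [measureReal_def, ENNReal.toReal_pos_iff]
  refine ⟨?_, measure_lt_top _ _⟩
  refine lt_of_lt_of_le (b := (volume.restrict (Set.Ioo (0 : ℝ) 1)) (Set.Ioo 0 (min u 1))) ?_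
    (measure_mono ?_)
  · rw [Measure.restrict_apply measurableSet_Ioo, Set.inter_eq_left.2]
    · simp [hu0]
    · exact Set.Ioo_subset_Ioo_right (min_le_right _ _)
  · intro t ht
    exact hsub ⟨ht.1, lt_of_lt_of_le ht.2 (min_le_left _ _)⟩

open MeasureTheory in
theorem wt_mem {i0 i1 : Fin n} {K : ℝ} (hK : 0 < K) {z : Fin n → ℂ}
    (hz : z ∈ NConf i0 i1) : (fun p : PT i0 i1 => wt i0 K z p.1) ∈ OrdCx (PT i0 i1) := by
  classical
  have hδ := delta_pos i0 hK hz.1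
  refine ⟨fun p => ?_, ?_, fun p q hp hq => ?_⟩
  · apply integral_nonneg
    intro t
    apply Set.indicator_nonneg
    simp
  · unfold wt
    rw [← integral_finsetSum]
    · rw [setIntegral_congr_fun (g := fun _ => (1 : ℝ)) measurableSet_Ioo]
      · simp
      · intro t ht
        have hg : Good i0 i1 (ctype (t * delta i0 K z) z) :=
          delta_good hK hz (mul_nonneg ht.1.le hδ.le) (by nlinarith [ht.2])
        simp only [Set.indicator_apply, Set.mem_ofPred_eq]
        rw [Finset.sum_eq_single (⟨_, hg⟩ : PT i0 i1)]
        · simp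
        · intro p _ hp
          rw [if_neg]
          intro h
          exact hp (Subtype.ext h.symm)
        · simp
    · intro p _
      exact (integrable_const (1 : ℝ)).indicator (wt_measurable i0 hδ.le _)
  · obtain ⟨t, -, ht⟩ := wt_support hp
    obtain ⟨s, -, hs⟩ := wt_support hq
    change p.1 ≤ q.1 ∨ q.1 ≤ p.1
    rw [← ht, ← hs]
    rcases le_total t s with h | h
    · exact Or.inr (ctype_anti z (mul_le_mul_of_nonneg_right h hδ.le))
    · exact Or.inl (ctype_anti z (mul_le_mul_of_nonneg_right h hδ.le))

open ContinuousMap in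
theorem nconf_equiv (i0 i1 : Fin n) : Nonempty (NConf i0 i1 ≃ₕ OrdCx (PT i0 i1)) := by
  classical
  obtain ⟨K, hK, hKb⟩ : ∃ K : ℝ, 0 < K ∧
      ∀ (p : PT i0 i1) i j, |(apex p i).im - (apex p j).im| ≤ K := by
    obtain ⟨M, hM⟩ := (Set.finite_range (fun x : PT i0 i1 × Fin n × Fin n =>
      |(apex x.1 x.2.1).im - (apex x.1 x.2.2).im|)).bddAbove
    refine ⟨max M 1, lt_max_of_lt_right one_pos, fun p i j => ?_⟩
    exact le_max_of_le_left (hM ⟨(p, i, j), rfl⟩)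
  let g : C(NConf i0 i1, OrdCx (PT i0 i1)) :=
    ⟨fun z => ⟨fun p => wt i0 K z.1 p.1, wt_mem hK z.2⟩, by
      refine Continuous.subtype_mk ?_ _
      refine continuous_pi fun p => ?_
      rw [continuous_iff_continuousAt]
      intro z
      exact (wt_continuousAt hK z.2 p.1).comp continuous_subtype_val.continuousAt⟩
  have hcomb : Continuous (comb : (PT i0 i1 → ℝ) → Fin n → ℂ) := by
    unfold comb
    fun_prop
  let f : C(OrdCx (PT i0 i1), NConf i0 i1) :=
    ⟨fun w => ⟨comb w.1, comb_mem w.2⟩, by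
      refine Continuous.subtype_mk ?_ _
      exact hcomb.comp continuous_subtype_val⟩
  refine ⟨⟨g, f, ?_, ?_⟩⟩
  · have hmem : ∀ x : unitInterval × NConf i0 i1,
        (fun i => ((1 - (x.1 : ℝ) : ℝ) : ℂ) * (f (g x.2)).1 i + ((x.1 : ℝ) : ℂ) * x.2.1 i)
          ∈ NConf i0 i1 := by
      rintro ⟨s, z⟩
      have hg0 : Good i0 i1 (ctype 0 z.1) := delta_good hK z.2 le_rfl (delta_pos i0 hK z.2.1)
      refine hg0.inS_mem (inS_segment ?_ (inS_self z.2) s.2.1 s.2.2)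
      refine comb_inS (q := ⟨ctype 0 z.1, hg0⟩) (wt_mem hK z.2).1 (wt_ne_zero hK z.2) ?_
      intro p hp
      obtain ⟨t, ht, he⟩ := wt_support hp
      change p.1 ≤ ctype 0 z.1
      rw [← he]
      exact ctype_anti z.1 (mul_nonneg ht.1.le (delta_pos i0 hK z.2.1).le)
    refine ⟨⟨⟨fun x => ⟨_, hmem x⟩, ?_⟩, ?_, ?_⟩⟩
    · refine Continuous.subtype_mk ?_ _
      have hfg : Continuous fun z : NConf i0 i1 => (f (g z)).1 :=
        continuous_subtype_val.comp (f.continuous.comp g.continuous)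
      refine continuous_pi fun i => ?_
      have h1 : Continuous fun x : unitInterval × NConf i0 i1 => (f (g x.2)).1 i :=
        (continuous_apply i).comp (hfg.comp continuous_snd)
      have h2 : Continuous fun x : unitInterval × NConf i0 i1 => x.2.1 i :=
        (continuous_apply i).comp (continuous_subtype_val.comp continuous_snd)
      have h3 : Continuous fun x : unitInterval × NConf i0 i1 => (x.1 : ℝ) :=
        continuous_subtype_val.comp continuous_fst
      exact ((Complex.continuous_ofReal.comp (continuous_const.sub h3)).mul h1).add
        ((Complex.continuous_ofReal.comp h3).mul h2)
    · intro z
      apply Subtype.ext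
      funext i
      simp
    · intro z
      apply Subtype.ext
      funext i
      simp
  · have hsupp : ∀ (w : OrdCx (PT i0 i1)) p, (g (f w)).1 p ≠ 0 → w.1 p ≠ 0 := by
      intro w p hp
      obtain ⟨t, ht, he⟩ := wt_support (i0 := i0) (K := K) (z := (f w).1) (p := p.1) hp
      have hδ := delta_pos i0 hK (f w).2.1
      obtain ⟨q, hq, hqe⟩ := ctype_comb w.2 hK hKb (ε := t * delta i0 K (comb w.1))
        (mul_nonneg ht.1.le hδ.le) (by
          have : (0 : ℝ) < delta i0 K (comb w.1) := hδ
          nlinarith [ht.2])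
      have : p = q := Subtype.ext (he.symm.trans hqe)
      rw [this]
      exact hq
    have hmem : ∀ x : unitInterval × OrdCx (PT i0 i1),
        (fun p => (1 - (x.1 : ℝ)) * (g (f x.2)).1 p + (x.1 : ℝ) * x.2.1 p)
          ∈ OrdCx (PT i0 i1) := by
      rintro ⟨s, w⟩
      have hz : ∀ p, (1 - (s : ℝ)) * (g (f w)).1 p + (s : ℝ) * w.1 p ≠ 0 → w.1 p ≠ 0 := by
        intro p hp h0
        apply hp
        have : (g (f w)).1 p = 0 := by
          by_contra h
          exact hsupp w p h h0
        rw [this, h0]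
        simp
      refine ⟨fun p => ?_, ?_, fun p q hp hq => w.2.2.2 p q (hz p hp) (hz q hq)⟩
      · exact add_nonneg (mul_nonneg (sub_nonneg.2 s.2.2) ((g (f w)).2.1 p))
          (mul_nonneg s.2.1 (w.2.1 p))
      · rw [Finset.sum_add_distrib, ← Finset.mul_sum, ← Finset.mul_sum, w.2.2.1,
          (g (f w)).2.2.1]
        ring
    refine ⟨⟨⟨fun x => ⟨_, hmem x⟩, ?_⟩, ?_, ?_⟩⟩
    · refine Continuous.subtype_mk ?_ _
      have hfg : Continuous fun w : OrdCx (PT i0 i1) => (g (f w)).1 :=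
        continuous_subtype_val.comp (g.continuous.comp f.continuous)
      refine continuous_pi fun i => ?_
      have h1 : Continuous fun x : unitInterval × OrdCx (PT i0 i1) => (g (f x.2)).1 i :=
        (continuous_apply i).comp (hfg.comp continuous_snd)
      have h2 : Continuous fun x : unitInterval × OrdCx (PT i0 i1) => x.2.1 i :=
        (continuous_apply i).comp (continuous_subtype_val.comp continuous_snd)
      have h3 : Continuous fun x : unitInterval × OrdCx (PT i0 i1) => (x.1 : ℝ) :=
        continuous_subtype_val.comp continuous_fst
      exact ((continuous_const.sub h3).mul h1).add (h3.mul h2)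
    · intro z
      apply Subtype.ext
      funext i
      simp
    · intro z
      apply Subtype.ext
      funext i
      simp

end Strata

/-- The configuration space splits off a circle. -/
noncomputable def confCircle {n : ℕ} (i0 i1 : Fin n) (hne : i0 ≠ i1) :
    ConfC n ≃ₜ (NConf i0 i1 × Circle) := by
  have hpos : ∀ x : ConfC n, 0 < ‖x.1 i1 - x.1 i0‖ := fun x =>
    norm_pos_iff.2 (sub_ne_zero.2 fun h => hne (x.2 h).symm)
  have hc : ∀ i, Continuous fun x : ConfC n => x.1 i := fun i =>
    (continuous_apply i).comp continuous_subtype_val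
  let u : ConfC n → Circle := fun x =>
    ⟨(x.1 i1 - x.1 i0) / (‖x.1 i1 - x.1 i0‖ : ℝ), mem_sphere_zero_iff_norm.2 (by
      rw [norm_div, Complex.norm_real, norm_norm, div_self (hpos x).ne'])⟩
  have huval : ∀ x, (u x : ℂ) = (x.1 i1 - x.1 i0) / (‖x.1 i1 - x.1 i0‖ : ℝ) := fun x => rfl
  have hu : Continuous u := by
    refine Continuous.subtype_mk ?_ _
    refine ((hc i1).sub (hc i0)).div
      (Complex.continuous_ofReal.comp ((hc i1).sub (hc i0)).norm) fun x => ?_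
    exact_mod_cast (hpos x).ne'
  have hdiff : ∀ x : ConfC n, x.1 i1 / (u x : ℂ) - x.1 i0 / (u x : ℂ) =
      ((‖x.1 i1 - x.1 i0‖ : ℝ) : ℂ) := by
    intro x
    have h1 : ((‖x.1 i1 - x.1 i0‖ : ℝ) : ℂ) ≠ 0 := by exact_mod_cast (hpos x).ne'
    have h2 : x.1 i1 - x.1 i0 ≠ 0 := norm_pos_iff.1 (hpos x)
    rw [← sub_div, huval]
    field_simp
  refine ⟨⟨fun x => (⟨fun i => x.1 i / (u x : ℂ), ?_, ?_, ?_⟩, u x),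
    fun y => ⟨fun i => (y.2 : ℂ) * y.1.1 i, ?_⟩, ?_, ?_⟩, ?_, ?_⟩
  · intro i j h
    exact x.2 ((div_left_inj' (u x).coe_ne_zero).1 h)
  · have := congrArg Complex.im (hdiff x)
    rw [Complex.sub_im, Complex.ofReal_im] at this
    linarith
  · have := congrArg Complex.re (hdiff x)
    rw [Complex.sub_re, Complex.ofReal_re] at this
    have := hpos x
    linarith
  · intro i j h
    exact y.1.2.1 (mul_left_cancel₀ y.2.coe_ne_zero h)
  · intro x
    apply Subtype.ext
    funext i
    exact mul_div_cancel₀ _ (u x).coe_ne_zero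
  · rintro ⟨z, c⟩
    have hcne := c.coe_ne_zero
    have hz : z.1 i1 - z.1 i0 = (((z.1 i1).re - (z.1 i0).re : ℝ) : ℂ) := by
      apply Complex.ext
      · simp
      · simp [z.2.2.1]
    have hzp : 0 < (z.1 i1).re - (z.1 i0).re := sub_pos.2 z.2.2.2
    have hval : ∀ h, u ⟨fun i => (c : ℂ) * z.1 i, h⟩ = c := by
      intro h
      refine Circle.ext ((huval _).trans ?_)
      change ((c : ℂ) * z.1 i1 - (c : ℂ) * z.1 i0) /
        ((‖(c : ℂ) * z.1 i1 - (c : ℂ) * z.1 i0‖ : ℝ) : ℂ) = (c : ℂ)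
      rw [← mul_sub, norm_mul, Circle.norm_coe, one_mul, hz, Complex.norm_real,
        Real.norm_of_nonneg hzp.le, mul_div_assoc, div_self, mul_one]
      exact_mod_cast hzp.ne'
    refine Prod.ext (Subtype.ext (funext fun i => ?_)) (hval _)
    refine (congrArg (fun d : Circle => (c : ℂ) * z.1 i / (d : ℂ)) (hval _)).trans ?_
    exact mul_div_cancel_left₀ _ hcne
  · refine Continuous.prodMk (Continuous.subtype_mk (continuous_pi fun i => ?_) _) hu
    exact (hc i).div (continuous_subtype_val.comp hu) fun x => (u x).coe_ne_zero
  · refine Continuous.subtype_mk (continuous_pi fun i => ?_) _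
    exact (continuous_subtype_val.comp continuous_snd).mul
      ((continuous_apply i).comp (continuous_subtype_val.comp continuous_fst))

open ContinuousMap in
/-- for `n ≥ 2`, `F(ℂ, n)` is homotopy equivalent to `X × S¹` for some finite
polyhedron `X` of dimension at most `n - 2` (realized as the space of a finite simplicial
complex all of whose faces have at most `n - 1` vertices). -/
theorem confC_homotopy_equiv (n : ℕ) (hn : 2 ≤ n) :
    ∃ (N : ℕ) (K : Geometry.SimplicialComplex ℝ (EuclideanSpace ℝ (Fin N))),
      K.faces.Finite ∧ (∀ s ∈ K.faces, s.card ≤ n - 1) ∧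
      Nonempty (ConfC n ≃ₕ (K.space × Circle)) := by
  let i0 : Fin n := ⟨0, by omega⟩
  let i1 : Fin n := ⟨1, by omega⟩
  have hne : i0 ≠ i1 := by
    intro h
    have := congrArg Fin.val h
    simp [i0, i1] at this
  obtain ⟨N, K, hfin, hcard, ⟨e⟩⟩ := ordCx_realize (PT i0 i1) (n - 1) chain_card
  obtain ⟨h⟩ := nconf_equiv i0 i1
  exact ⟨N, K, hfin, hcard, ⟨(confCircle i0 i1 hne).toHomotopyEquiv.trans
    ((h.trans e.toHomotopyEquiv).prodCongr (ContinuousMap.HomotopyEquiv.refl Circle))⟩⟩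
end
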